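/- (Distinctness of two components' clusters.) Fix means μ_1,…,μ_K ∈ ℝ^d, standard deviations σ_1,…,σ_K > 0, weights w_1,…,w_K > 0 summing to 1, θ > 0, and distinct indices m ≠ m′ with μ_m ≠ μ_{m′}. For each n ≥ 2, let a_1,…,a_n be i.i.d. samples from the mixture Σ_{k=1}^K w_k·N(μ_k, σ_k²·I_d), let V_m = {i : ‖a_i − μ_m‖ ≤ θσ_m} and V_{m′} = {i : ‖a_i − μ_{m′}‖ ≤ θσ_{m′}}, let λ = λ(n) satisfy 0 ≤ λ < ‖μ_m − μ_{m′}‖/(2(n − 1)), and let x* be the minimizer of the sum-of-norms clustering objective with parameter λ. Then there exist constants c > 0 and C such that for every n, with probability at least 1 − C·e^{−c·n}, there exist indices i ∈ V_m and i′ ∈ V_{m′} with x_i* ≠ x_{i′}*; consequently V_m and V_{m′} are not contained in a common cluster. -/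

import Mathlib

open MeasureTheory ProbabilityTheory Finset

/-- The sum-of-norms clustering objective. -/
noncomputable def sonObjective {d n : ℕ} (a : Fin n → EuclideanSpace ℝ (Fin d)) (lam : ℝ)
    (x : Fin n → EuclideanSpace ℝ (Fin d)) : ℝ :=
  (1 / 2) * ∑ i, ‖x i - a i‖ ^ 2 + lam * ∑ i, ∑ j, if i < j then ‖x i - x j‖ else 0

/-- The spherical Gaussian `N(μ, σ²·I_d)` on `ℝ^d`. -/
noncomputable def sphericalGaussian (d : ℕ) (μ : EuclideanSpace ℝ (Fin d)) (σ : ℝ) :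
    Measure (EuclideanSpace ℝ (Fin d)) :=
  (Measure.pi fun i : Fin d => gaussianReal (μ i) (Real.toNNReal (σ ^ 2))).map
    (MeasurableEquiv.toLp 2 (Fin d → ℝ))

/-- The mixture of Gaussians `Σ_m w_m · N(μ_m, σ_m²·I_d)`. -/
noncomputable def gaussianMixture (d K : ℕ) (μ : Fin K → EuclideanSpace ℝ (Fin d))
    (σ : Fin K → ℝ) (w : Fin K → ℝ) : Measure (EuclideanSpace ℝ (Fin d)) :=
  ∑ m, ENNReal.ofReal (w m) • sphericalGaussian d (μ m) (σ m)

/-!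
Moving a single point `x k` changes the pairwise penalty by at most `λ (n - 1)` times the length of
the move, so in a minimizer every `x k` lies within `λ (n - 1)` of its datum `a k`. Data that share
a cluster are therefore at distance at most `2 λ (n - 1) ≤ ‖p - q‖`. On the other hand, arbitrarily
near two distinct points `p` and `q` there are nonempty open sets `U` and `V` whose points are
pairwise strictly farther apart than `‖p - q‖`: start `U` slightly beyond `p` on the ray from `q`.
A measure with full support charges `U` and `V`, so a sample of size `n` misses one of them with
probability exponentially small in `n`.
-/

section Clustering

variable {ι E : Type*} [Fintype ι] [LinearOrder ι] [NormedAddCommGroup E]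

/-- The sum of the distances over the unordered pairs of points of a finite family, each pair being
counted once, with its smaller index first. -/
noncomputable def pairwiseDistSum (x : ι → E) : ℝ :=
  ∑ i, ∑ j, if i < j then ‖x i - x j‖ else 0

/-- The sum-of-norms clustering objective in a normed space. For data in `EuclideanSpace ℝ (Fin d)`
indexed by `Fin n` it is definitionally `sonObjective`. -/
noncomputable def sumOfNormsObjective (a : ι → E) (lam : ℝ) (x : ι → E) : ℝ :=
  (1 / 2) * ∑ i, ‖x i - a i‖ ^ 2 + lam * pairwiseDistSum x

lemma sum_sum_ite_lt_add (e : ι → ℝ) :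
    ∑ i, ∑ j, (if i < j then e i + e j else 0) = (Fintype.card ι - 1) * ∑ i, e i := by
  have split_pair (i j : ι) : (if i < j then e i + e j else 0)
      = (if i < j then e i else 0) + if i < j then e j else 0 := by
    split_ifs <;> simp
  have merge_pair (i j : ι) : ((if i < j then e i else 0) + if j < i then e i else 0)
      = e i - if j = i then e i else 0 := by
    rcases lt_trichotomy i j with h | rfl | h
    · simp [h, h.ne', h.not_gt]
    · simp
    · simp [h, h.ne, h.not_gt]
  calc ∑ i, ∑ j, (if i < j then e i + e j else 0)
      = ∑ i, ∑ j, (if i < j then e i else 0) + ∑ i, ∑ j, if i < j then e j else 0 := by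
        simp only [split_pair, sum_add_distrib]
    _ = ∑ i, ∑ j, ((if i < j then e i else 0) + if j < i then e i else 0) := by
        rw [sum_comm (f := fun i j ↦ if i < j then e j else 0)]
        simp only [sum_add_distrib]
    _ = (Fintype.card ι - 1) * ∑ i, e i := by
        simp only [merge_pair, sum_sub_distrib, sum_const, card_univ, nsmul_eq_mul,
          sum_ite_eq', mem_univ, if_true, ← mul_sum]
        ring

lemma pairwiseDistSum_le_add (x y : ι → E) :
    pairwiseDistSum y ≤ pairwiseDistSum x + (Fintype.card ι - 1) * ∑ i, ‖y i - x i‖ := by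
  simp only [pairwiseDistSum, ← sum_sum_ite_lt_add, ← sum_add_distrib]
  refine sum_le_sum fun i _ ↦ sum_le_sum fun j _ ↦ ?_
  split_ifs
  · calc ‖y i - y j‖ = ‖(x i - x j) + ((y i - x i) - (y j - x j))‖ := by congr 1; abel
      _ ≤ ‖x i - x j‖ + (‖y i - x i‖ + ‖y j - x j‖) :=
        (norm_add_le _ _).trans (by gcongr; exact norm_sub_le _ _)
  · simp

lemma sum_norm_update_sub (x : ι → E) (k : ι) (z : E) :
    ∑ i, ‖Function.update x k z i - x i‖ = ‖z - x k‖ := by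
  rw [Fintype.sum_eq_single k fun i hi ↦ by simp [hi], Function.update_self]

lemma sum_norm_update_sub_sq (a x : ι → E) (k : ι) (z : E) :
    ∑ i, ‖Function.update x k z i - a i‖ ^ 2
      = ∑ i, ‖x i - a i‖ ^ 2 - ‖x k - a k‖ ^ 2 + ‖z - a k‖ ^ 2 := by
  have hsum : ∑ i, (‖Function.update x k z i - a i‖ ^ 2 - ‖x i - a i‖ ^ 2)
      = ‖z - a k‖ ^ 2 - ‖x k - a k‖ ^ 2 := by
    rw [Fintype.sum_eq_single k fun i hi ↦ by simp [hi], Function.update_self]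
  rw [sum_sub_distrib] at hsum
  linarith

variable {a x : ι → E} {lam : ℝ}

lemma norm_sub_sq_le_of_minimizer (hlam : 0 ≤ lam)
    (hx : ∀ y, sumOfNormsObjective a lam x ≤ sumOfNormsObjective a lam y) (k : ι) (z : E) :
    ‖x k - a k‖ ^ 2 ≤ ‖z - a k‖ ^ 2 + 2 * (lam * (Fintype.card ι - 1)) * ‖z - x k‖ := by
  have hmin := hx (Function.update x k z)
  have hpair := mul_le_mul_of_nonneg_left
    (pairwiseDistSum_le_add x (Function.update x k z)) hlam
  rw [sum_norm_update_sub] at hpair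
  rw [sumOfNormsObjective, sumOfNormsObjective, sum_norm_update_sub_sq] at hmin
  linarith

variable [NormedSpace ℝ E]

lemma norm_sub_le_of_minimizer (hlam : 0 ≤ lam)
    (hx : ∀ y, sumOfNormsObjective a lam x ≤ sumOfNormsObjective a lam y) (k : ι) :
    ‖x k - a k‖ ≤ lam * (Fintype.card ι - 1) := by
  set D := ‖x k - a k‖
  set L := lam * (Fintype.card ι - 1)
  have hL : 0 ≤ L := by
    have : (1 : ℝ) ≤ Fintype.card ι := Nat.one_le_cast.2 (Fintype.card_pos_iff.2 ⟨k⟩)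
    exact mul_nonneg hlam (by linarith)
  by_contra! hLD
  have hD : 0 < D := hL.trans_lt hLD
  -- Compare with the point of the segment from `a k` to `x k` at distance `L` from `a k`.
  obtain ⟨z, hza, hzx⟩ : ∃ z, ‖z - a k‖ = L ∧ ‖z - x k‖ = D - L := by
    refine ⟨AffineMap.lineMap (a k) (x k) (L / D), ?_, ?_⟩
    · rw [← dist_eq_norm, dist_lineMap_left, dist_comm, dist_eq_norm,
        Real.norm_of_nonneg (by positivity), div_mul_cancel₀ _ hD.ne']
    · rw [← dist_eq_norm, dist_lineMap_right, dist_comm, dist_eq_norm,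
        Real.norm_of_nonneg (sub_nonneg.2 ((div_le_one hD).2 hLD.le)), sub_mul, one_mul,
        div_mul_cancel₀ _ hD.ne']
  have hle := norm_sub_sq_le_of_minimizer hlam hx k z
  rw [hza, hzx] at hle
  nlinarith [sq_pos_of_pos (sub_pos.2 hLD)]

lemma ne_of_lt_norm_sub_of_minimizer (hlam : 0 ≤ lam)
    (hx : ∀ y, sumOfNormsObjective a lam x ≤ sumOfNormsObjective a lam y) {i j : ι}
    (hij : 2 * (lam * (Fintype.card ι - 1)) < ‖a i - a j‖) : x i ≠ x j := by
  intro hxij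
  have hi := norm_sub_le_of_minimizer hlam hx i
  have hj := norm_sub_le_of_minimizer hlam hx j
  have htri := norm_sub_le_norm_sub_add_norm_sub (a i) (x i) (a j)
  rw [norm_sub_rev (a i) (x i), hxij] at htri
  rw [hxij] at hi
  linarith

end Clustering

lemma exists_isOpen_subset_ball_norm_sub_lt {E : Type*} [NormedAddCommGroup E] [NormedSpace ℝ E]
    {p q : E} (hpq : p ≠ q) {r s : ℝ} (hr : 0 < r) (hs : 0 < s) :
    ∃ U V : Set E, IsOpen U ∧ IsOpen V ∧ U.Nonempty ∧ V.Nonempty ∧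
      U ⊆ Metric.ball p r ∧ V ⊆ Metric.ball q s ∧ ∀ a ∈ U, ∀ b ∈ V, ‖p - q‖ < ‖a - b‖ := by
  have hD : 0 < dist p q := dist_pos.2 hpq
  obtain ⟨p', hp', hlt⟩ : ∃ p' ∈ Metric.ball p r, dist p q < dist p' q := by
    obtain ⟨ε, hε, hεr⟩ : ∃ ε > 0, ε * dist p q < r :=
      ⟨r / (2 * dist p q), by positivity, by field_simp; linarith⟩
    refine ⟨AffineMap.lineMap p q (-ε), ?_, ?_⟩
    · rwa [Metric.mem_ball, dist_lineMap_left, norm_neg, Real.norm_of_nonneg hε.le]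
    · rw [dist_lineMap_right, sub_neg_eq_add, Real.norm_of_nonneg (by positivity)]
      nlinarith
  have hopen : IsOpen (Metric.ball p r ×ˢ Metric.ball q s ∩ {z | dist p q < dist z.1 z.2}) :=
    (Metric.isOpen_ball.prod Metric.isOpen_ball).inter (isOpen_lt continuous_const continuous_dist)
  obtain ⟨U, V, hU, hV, hpU, hqV, hUV⟩ :=
    isOpen_prod_iff.1 hopen p' q ⟨⟨hp', Metric.mem_ball_self hs⟩, hlt⟩
  refine ⟨U, V, hU, hV, ⟨p', hpU⟩, ⟨q, hqV⟩, fun a ha ↦ (hUV (Set.mk_mem_prod ha hqV)).1.1,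
    fun b hb ↦ (hUV (Set.mk_mem_prod hpU hb)).1.2, fun a ha b hb ↦ ?_⟩
  rw [← dist_eq_norm, ← dist_eq_norm]
  exact (hUV (Set.mk_mem_prod ha hb)).2

section Sampling

variable {ι E : Type*} [Fintype ι] [MeasurableSpace E] (P : Measure E) [IsProbabilityMeasure P]

lemma pi_forall_notMem_le {U : Set E} (hU : MeasurableSet U) :
    Measure.pi (fun _ : ι ↦ P) {a | ∀ i, a i ∉ U}
      ≤ ENNReal.ofReal (Real.exp (-P.real U * Fintype.card ι)) := by
  have hset : {a : ι → E | ∀ i, a i ∉ U} = Set.univ.pi fun _ ↦ Uᶜ := by ext; simp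
  rw [hset, Measure.pi_pi, prod_const, card_univ, ← ofReal_measureReal,
    ← ENNReal.ofReal_pow measureReal_nonneg, mul_comm, Real.exp_nat_mul,
    probReal_compl_eq_one_sub hU]
  gcongr
  · exact sub_nonneg.2 measureReal_le_one
  · exact Real.one_sub_le_exp_neg _

lemma one_sub_two_mul_exp_le_pi_exists_mem {U V : Set E} (hU : MeasurableSet U)
    (hV : MeasurableSet V) {c : ℝ} (hcU : c ≤ P.real U) (hcV : c ≤ P.real V) :
    ENNReal.ofReal (1 - 2 * Real.exp (-c * Fintype.card ι))
      ≤ Measure.pi (fun _ : ι ↦ P) {a | (∃ i, a i ∈ U) ∧ ∃ j, a j ∈ V} := by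
  have hmiss {W : Set E} (hW : MeasurableSet W) (hcW : c ≤ P.real W) :
      Measure.pi (fun _ : ι ↦ P) {a | ∀ i, a i ∉ W}
        ≤ ENNReal.ofReal (Real.exp (-c * Fintype.card ι)) :=
    (pi_forall_notMem_le P hW).trans (by gcongr)
  set hit := {a : ι → E | (∃ i, a i ∈ U) ∧ ∃ j, a j ∈ V}
  have hcompl : hitᶜ = {a | ∀ i, a i ∉ U} ∪ {a | ∀ i, a i ∉ V} := by
    ext a
    simp [hit, imp_iff_not_or]
  rw [ENNReal.ofReal_sub _ (by positivity), ENNReal.ofReal_one, tsub_le_iff_right]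
  calc 1 ≤ Measure.pi (fun _ : ι ↦ P) hit + Measure.pi (fun _ : ι ↦ P) hitᶜ :=
        measure_univ.symm.le.trans (measure_univ_le_add_compl hit)
    _ ≤ _ := by
        rw [hcompl, two_mul, ENNReal.ofReal_add (Real.exp_nonneg _) (Real.exp_nonneg _)]
        gcongr
        exact (measure_union_le _ _).trans (add_le_add (hmiss hU hcU) (hmiss hV hcV))

end Sampling

section GaussianMixture

variable {d K : ℕ}

instance isProbabilityMeasure_sphericalGaussian (μ : EuclideanSpace ℝ (Fin d)) (σ : ℝ) :
    IsProbabilityMeasure (sphericalGaussian d μ σ) :=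
  Measure.isProbabilityMeasure_map (MeasurableEquiv.measurable _).aemeasurable

lemma isOpenPosMeasure_sphericalGaussian (μ : EuclideanSpace ℝ (Fin d)) {σ : ℝ} (hσ : σ ≠ 0) :
    (sphericalGaussian d μ σ).IsOpenPosMeasure := by
  have hvar : (σ ^ 2).toNNReal ≠ 0 := (Real.toNNReal_pos.2 (by positivity)).ne'
  have (i : Fin d) : (gaussianReal (μ i) (σ ^ 2).toNNReal).IsOpenPosMeasure :=
    (gaussianReal_absolutelyContinuous' (μ i) hvar).isOpenPosMeasure
  exact (PiLp.continuous_toLp 2 _).isOpenPosMeasure_map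
    (MeasurableEquiv.toLp 2 (Fin d → ℝ)).surjective

variable {μ : Fin K → EuclideanSpace ℝ (Fin d)} {σ w : Fin K → ℝ}

lemma isProbabilityMeasure_gaussianMixture (hw : ∀ k, 0 ≤ w k) (hwsum : ∑ k, w k = 1) :
    IsProbabilityMeasure (gaussianMixture d K μ σ w) where
  measure_univ := by
    simp only [gaussianMixture, Measure.coe_finsetSum, Finset.sum_apply, Measure.smul_apply,
      measure_univ, smul_eq_mul, mul_one]
    rw [← ENNReal.ofReal_sum_of_nonneg fun k _ ↦ hw k, hwsum, ENNReal.ofReal_one]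

lemma isOpenPosMeasure_gaussianMixture {k : Fin K} (hw : 0 < w k) (hσ : σ k ≠ 0) :
    (gaussianMixture d K μ σ w).IsOpenPosMeasure := by
  have := isOpenPosMeasure_sphericalGaussian (μ k) hσ
  have := Measure.isOpenPosMeasure_smul (sphericalGaussian d (μ k) (σ k))
    (ENNReal.ofReal_pos.2 hw).ne'
  exact (single_le_sum (f := fun k ↦ ENNReal.ofReal (w k) • sphericalGaussian d (μ k) (σ k))
    (fun _ _ ↦ Measure.zero_le _) (mem_univ k)).isOpenPosMeasure

end GaussianMixture

theorem distinctness_of_two_components_general {E : Type*} [NormedAddCommGroup E]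
    [NormedSpace ℝ E] [MeasurableSpace E] [OpensMeasurableSpace E] (P : Measure E)
    [IsProbabilityMeasure P] [P.IsOpenPosMeasure] {p q : E} (hpq : p ≠ q) {r s : ℝ}
    (hr : 0 < r) (hs : 0 < s) :
    ∃ c : ℝ, 0 < c ∧ ∀ n : ℕ, 2 ≤ n → ∀ lam : ℝ, 0 ≤ lam →
      lam ≤ ‖p - q‖ / (2 * ((n : ℝ) - 1)) →
      ENNReal.ofReal (1 - 2 * Real.exp (-c * n)) ≤
        (Measure.pi fun _ : Fin n ↦ P)
          {a | ∀ x : Fin n → E,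
            (∀ y : Fin n → E, sumOfNormsObjective a lam x ≤ sumOfNormsObjective a lam y) →
            ∃ i j : Fin n, ‖a i - p‖ ≤ r ∧ ‖a j - q‖ ≤ s ∧ x i ≠ x j} := by
  obtain ⟨U, V, hU, hV, hUne, hVne, hUr, hVs, hUV⟩ :=
    exists_isOpen_subset_ball_norm_sub_lt hpq hr hs
  have hPU : 0 < P.real U := ENNReal.toReal_pos (hU.measure_pos P hUne).ne' (measure_ne_top _ _)
  have hPV : 0 < P.real V := ENNReal.toReal_pos (hV.measure_pos P hVne).ne' (measure_ne_top _ _)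
  refine ⟨min (P.real U) (P.real V), lt_min hPU hPV, fun n hn lam hlam hlam_le ↦ ?_⟩
  have hhit := one_sub_two_mul_exp_le_pi_exists_mem (ι := Fin n) P hU.measurableSet
    hV.measurableSet (min_le_left _ _) (min_le_right _ _)
  rw [Fintype.card_fin] at hhit
  refine hhit.trans (measure_mono ?_)
  rintro a ⟨⟨i, hi⟩, j, hj⟩ x hx
  have hsep : 2 * (lam * (Fintype.card (Fin n) - 1)) < ‖a i - a j‖ := by
    have : (2 : ℝ) ≤ n := Nat.ofNat_le_cast.2 hn
    rw [le_div_iff₀ (by linarith)] at hlam_le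
    rw [Fintype.card_fin]
    linarith [hUV _ hi _ hj]
  exact ⟨i, j, (mem_ball_iff_norm.1 (hUr hi)).le, (mem_ball_iff_norm.1 (hVs hj)).le,
    ne_of_lt_norm_sub_of_minimizer hlam hx hsep⟩

/-- Distinctness of two components' clusters: if
`0 ≤ λ < ‖μ_m − μ_{m′}‖/(2(n − 1))`, then with probability at least `1 − C·e^{−c·n}`
there are samples `i ∈ V_m` and `i′ ∈ V_{m′}` assigned to different clusters, so `V_m`
and `V_{m′}` are not contained in a common cluster. -/
theorem distinctness_of_two_components
    (d K : ℕ) (μ : Fin K → EuclideanSpace ℝ (Fin d)) (σ : Fin K → ℝ) (hσ : ∀ k, 0 < σ k)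
    (w : Fin K → ℝ) (hw : ∀ k, 0 < w k) (hwsum : ∑ k, w k = 1)
    (θ : ℝ) (hθ : 0 < θ) (m m' : Fin K) (hmm' : m ≠ m') (hμ : μ m ≠ μ m')
    (lam : ℕ → ℝ)
    (hlam : ∀ n : ℕ, 2 ≤ n →
      0 ≤ lam n ∧ lam n < ‖μ m - μ m'‖ / (2 * ((n : ℝ) - 1))) :
    ∃ c : ℝ, 0 < c ∧ ∃ C : ℝ, ∀ n : ℕ, 2 ≤ n →
      ENNReal.ofReal (1 - C * Real.exp (-c * n)) ≤
        (Measure.pi fun _ : Fin n => gaussianMixture d K μ σ w)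
          {a | ∀ x : Fin n → EuclideanSpace ℝ (Fin d),
            (∀ y : Fin n → EuclideanSpace ℝ (Fin d),
              sonObjective a (lam n) x ≤ sonObjective a (lam n) y) →
            ∃ i i' : Fin n, ‖a i - μ m‖ ≤ θ * σ m ∧ ‖a i' - μ m'‖ ≤ θ * σ m' ∧
              x i ≠ x i'} := by
  have := isProbabilityMeasure_gaussianMixture (μ := μ) (σ := σ) (fun k ↦ (hw k).le) hwsum
  have := isOpenPosMeasure_gaussianMixture (μ := μ) (hw m) (hσ m).ne'
  obtain ⟨c, hc, h⟩ := distinctness_of_two_components_general (gaussianMixture d K μ σ w) hμ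
    (mul_pos hθ (hσ m)) (mul_pos hθ (hσ m'))
  exact ⟨c, hc, 2, fun n hn ↦ h n hn (lam n) (hlam n hn).1 (hlam n hn).2.le⟩
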